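/- Key inequality in the proof of the trickling down theorem: Suppose d ≥ 3 and there is a real γ < 1 such that λ₂(G_v) ≤ γ for every vertex v ∈ 𝒞(1) (identifying v with the singleton face {v}). Then for every f : 𝒞(1) → ℝ, 𝔈_{G_∅}(f, f) ≥ (1 − γ)·(Var_{π_1}(f) − Var_{π_1}(G_∅ f)). -/

import Mathlib

/-!
All weights are expressed through the unnormalised weight `wgt S`, the `π_d`-mass above `S`.
Writing `extW S y` for the weight of `S ∪ {y}` (and `0` if `y ∈ S`), double counting gives
`∑ y, extW S y = (d - |S|) * wgt S` (`sum_extW`). Hence `π_1(x) ∝ wgt {x}`,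
`π_{v,1}(x) ∝ extW {v} x`, and the local walk at `S` moves from `x` to `y` with probability
`extW (S ∪ {x}) y / ((d - |S| - 1) * wgt (S ∪ {x}))` (`localWalk_eq`).

Two consequences drive the proof. First, averaging over `v ∼ π_1`, the Dirichlet forms of the
walks `G_v` average to that of `G_∅`. Second, the mean of `f` under `π_{v,1}` is `(G_∅ f)(v)`, so the
average of the local variances is `E[f²] - E[(G_∅ f)²]`, which equals
`Var(f) - Var(G_∅ f)` because `G_∅` preserves the mean. The bound `λ₂(G_v) ≤ γ` gives
`𝔈_{G_v}(f, f) ≥ (1 - γ) Var_{π_{v,1}}(f)` (`local_poincare`); averaging it over `v` is the claim.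
-/

open Finset

noncomputable section

variable {E : Type*} [Fintype E] [DecidableEq E]

/-- The faces of cardinality `k` of the set family `C`. -/
def faces (C : Finset (Finset E)) (k : ℕ) : Finset (Finset E) :=
  C.filter fun S => S.card = k

/-- `C` is a pure simplicial complex of dimension `d`: it is nonempty, closed under
taking subsets, and every face is contained in a face of cardinality `d`
(hence all maximal faces have cardinality `d`). -/
def IsPureComplex (C : Finset (Finset E)) (d : ℕ) : Prop :=
  C.Nonempty ∧ (∀ S ∈ C, ∀ T ⊆ S, T ∈ C) ∧ (∀ S ∈ C, ∃ T ∈ C, S ⊆ T ∧ T.card = d)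

/-- `pid` is a probability distribution with full support on the top level faces. -/
def IsTopDist (C : Finset (Finset E)) (d : ℕ) (pid : Finset E → ℝ) : Prop :=
  (∀ T ∈ faces C d, 0 < pid T) ∧ ∑ T ∈ faces C d, pid T = 1

/-- The (unnormalised) weight of a face: total top-level mass above it. -/
def wgt (C : Finset (Finset E)) (d : ℕ) (pid : Finset E → ℝ) (S : Finset E) : ℝ :=
  ∑ T ∈ (faces C d).filter (fun T => S ⊆ T), pid T

/-- The distribution `π_k` at level `k`: `π_k(S) ∝ Σ_{T ∈ C(d), T ⊇ S} π_d(T)`. -/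
def piLev (C : Finset (Finset E)) (d : ℕ) (pid : Finset E → ℝ) (k : ℕ) (S : Finset E) : ℝ :=
  if S ∈ faces C k then wgt C d pid S / ∑ T ∈ faces C k, wgt C d pid T else 0

/-- The level-`k` faces of the link of the face `S`. -/
def linkFaces (C : Finset (Finset E)) (S : Finset E) (k : ℕ) : Finset (Finset E) :=
  Finset.univ.powerset.filter fun T => S ∩ T = ∅ ∧ S ∪ T ∈ C ∧ T.card = k

/-- The distribution `π_{S,k}` on the level-`k` faces of the link of `S`:
`π_{S,k}(T) ∝ π_{|S|+k}(S ∪ T)`. -/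
def linkPi (C : Finset (Finset E)) (d : ℕ) (pid : Finset E → ℝ) (S : Finset E) (k : ℕ)
    (T : Finset E) : ℝ :=
  if T ∈ linkFaces C S k then
    piLev C d pid (S.card + k) (S ∪ T) /
      ∑ T' ∈ linkFaces C S k, piLev C d pid (S.card + k) (S ∪ T')
  else 0

/-- Generic up operator with respect to a measure `ν` on a collection `dom` of faces:
from `R` move to a superset `T ∈ dom` with probability proportional to `ν T`.
Acts on functions on `dom`, producing a function on the level below. -/
def upWith (ν : Finset E → ℝ) (dom : Finset (Finset E)) (f : Finset E → ℝ) (R : Finset E) : ℝ :=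
  ∑ T ∈ dom.filter (fun T => R ⊆ T),
    (ν T / ∑ T' ∈ dom.filter (fun T' => R ⊆ T'), ν T') * f T

/-- The up operator `P_k^↑`, acting on functions on `C(k+1)` and producing a function
on `C(k)`. -/
def upOp (C : Finset (Finset E)) (d : ℕ) (pid : Finset E → ℝ) (k : ℕ) :
    (Finset E → ℝ) → Finset E → ℝ :=
  upWith (piLev C d pid (k+1)) (faces C (k+1))

/-- The down operator `P_k^↓` (uniform removal of an element), acting on functions
on `C(k-1)` and producing a function on `C(k)`. -/
def downOp (k : ℕ) (g : Finset E → ℝ) (S : Finset E) : ℝ :=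
  (1 / (k : ℝ)) * ∑ i ∈ S, g (S.erase i)

/-- The down-up walk `P_k^∨ = P_k^↓ P_{k-1}^↑` on `C(k)`, as an operator on functions. -/
def downUp (C : Finset (Finset E)) (d : ℕ) (pid : Finset E → ℝ) (k : ℕ)
    (f : Finset E → ℝ) : Finset E → ℝ :=
  downOp k (upOp C d pid (k-1) f)

/-- The up-down walk `P_k^∧ = P_k^↑ P_{k+1}^↓` on `C(k)`, as an operator on functions. -/
def upDown (C : Finset (Finset E)) (d : ℕ) (pid : Finset E → ℝ) (k : ℕ)
    (f : Finset E → ℝ) : Finset E → ℝ :=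
  upOp C d pid k (downOp (k+1) f)

/-- The up operator `P_{S,k}^↑` on the link of `S`, acting on functions on `C_S(k+1)`
and producing a function on `C_S(k)`. -/
def linkUp (C : Finset (Finset E)) (d : ℕ) (pid : Finset E → ℝ) (S : Finset E) (k : ℕ) :
    (Finset E → ℝ) → Finset E → ℝ :=
  upWith (linkPi C d pid S (k+1)) (linkFaces C S (k+1))

/-- The up-down walk `P_{S,k}^∧` on the level-`k` faces of the link of `S`. -/
def linkUpDown (C : Finset (Finset E)) (d : ℕ) (pid : Finset E → ℝ) (S : Finset E) (k : ℕ)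
    (f : Finset E → ℝ) : Finset E → ℝ :=
  linkUp C d pid S k (downOp (k+1) f)

/-- The local walk `G_S := 2 P_{S,1}^∧ - I` on the vertices of the link of `S`. -/
def localWalk (C : Finset (Finset E)) (d : ℕ) (pid : Finset E → ℝ) (S : Finset E)
    (f : Finset E → ℝ) (T : Finset E) : ℝ :=
  2 * linkUpDown C d pid S 1 f T - f T

/-- Variance of `f` with respect to the measure `μ` on `dom`. -/
def pVar (μ : Finset E → ℝ) (dom : Finset (Finset E)) (f : Finset E → ℝ) : ℝ :=
  (∑ x ∈ dom, μ x * f x ^ 2) - (∑ x ∈ dom, μ x * f x) ^ 2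

/-- Relative entropy `Ent_μ(f) = E_μ[f log f] - E_μ[f] log E_μ[f]` of `f` with respect to
the measure `μ` on `dom` (note `Real.log 0 = 0`, giving the convention `0 log 0 = 0`). -/
def pEnt (μ : Finset E → ℝ) (dom : Finset (Finset E)) (f : Finset E → ℝ) : ℝ :=
  (∑ x ∈ dom, μ x * (f x * Real.log (f x))) -
    (∑ x ∈ dom, μ x * f x) * Real.log (∑ x ∈ dom, μ x * f x)

/-- The Dirichlet form `𝔈_P(f,g) = Σ_x μ(x) f(x) ((I - P) g)(x)` of a Markov operator `P`
reversible with respect to `μ` on `dom`. -/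
def pDiri (μ : Finset E → ℝ) (dom : Finset (Finset E))
    (P : (Finset E → ℝ) → Finset E → ℝ) (f g : Finset E → ℝ) : ℝ :=
  ∑ x ∈ dom, μ x * f x * (g x - P g x)

/-- The second largest eigenvalue of a Markov operator `P` reversible with respect to the
distribution `μ` on `dom`, via the variational characterisation: the supremum of Rayleigh
quotients `⟨f, Pf⟩_μ / ⟨f, f⟩_μ` over `f` orthogonal to the constants in `L²(μ)`. -/
noncomputable def lamTwo (μ : Finset E → ℝ) (dom : Finset (Finset E))
    (P : (Finset E → ℝ) → Finset E → ℝ) : ℝ :=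
  sSup {r : ℝ | ∃ f : Finset E → ℝ,
    (∑ x ∈ dom, μ x * f x = 0) ∧ (∑ x ∈ dom, μ x * f x ^ 2 ≠ 0) ∧
    r = (∑ x ∈ dom, μ x * f x * P f x) / ∑ x ∈ dom, μ x * f x ^ 2}

/-- The modified log-Sobolev constant `ρ(P)` of a Markov operator `P` reversible with
respect to `μ` on `dom`. -/
noncomputable def mlsConst (μ : Finset E → ℝ) (dom : Finset (Finset E))
    (P : (Finset E → ℝ) → Finset E → ℝ) : ℝ :=
  sInf {r : ℝ | ∃ f : Finset E → ℝ, (∀ x ∈ dom, 0 < f x) ∧ pEnt μ dom f ≠ 0 ∧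
    r = pDiri μ dom P f (fun x => Real.log (f x)) / pEnt μ dom f}

/-! ### Weights of faces and double counting -/

/-- Weight of the face `S ∪ {y}`, set to zero when `y ∈ S`. -/
def extW (C : Finset (Finset E)) (d : ℕ) (pid : Finset E → ℝ) (S : Finset E) (y : E) : ℝ :=
  if y ∈ S then 0 else wgt C d pid (insert y S)

lemma wgt_nonneg {C : Finset (Finset E)} {d : ℕ} {pid : Finset E → ℝ}
    (hpid : IsTopDist C d pid) (S : Finset E) : 0 ≤ wgt C d pid S :=
  Finset.sum_nonneg fun T hT => (hpid.1 T (Finset.mem_filter.1 hT).1).le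

lemma wgt_pos {C : Finset (Finset E)} {d : ℕ} {pid : Finset E → ℝ}
    (hC : IsPureComplex C d) (hpid : IsTopDist C d pid) {S : Finset E} (hS : S ∈ C) :
    0 < wgt C d pid S := by
  obtain ⟨T, hT, hST, hc⟩ := hC.2.2 S hS
  have hT' : T ∈ faces C d := Finset.mem_filter.2 ⟨hT, hc⟩
  exact Finset.sum_pos (fun T hT => hpid.1 T (Finset.mem_filter.1 hT).1)
    ⟨T, Finset.mem_filter.2 ⟨hT', hST⟩⟩

lemma wgt_eq_zero {C : Finset (Finset E)} {d : ℕ} {pid : Finset E → ℝ}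
    (hC : IsPureComplex C d) {S : Finset E} (hS : S ∉ C) : wgt C d pid S = 0 := by
  unfold wgt
  rw [Finset.filter_eq_empty_iff.2, Finset.sum_empty]
  intro T hT hST
  exact hS (hC.2.1 T (Finset.mem_filter.1 hT).1 S hST)

lemma ext_nonneg {C : Finset (Finset E)} {d : ℕ} {pid : Finset E → ℝ}
    (hpid : IsTopDist C d pid) (S : Finset E) (y : E) : 0 ≤ extW C d pid S y := by
  unfold extW
  split_ifs
  exacts [le_rfl, wgt_nonneg hpid _]

/-- Each top face `T ⊇ S` is counted once for each of its `d - |S|` elements outside `S`. -/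
lemma sum_extW (C : Finset (Finset E)) (d : ℕ) (pid : Finset E → ℝ) (S : Finset E) :
    ∑ y, extW C d pid S y = ((d : ℝ) - S.card) * wgt C d pid S := by
  have h1 : ∀ y, extW C d pid S y =
      ∑ T ∈ (faces C d).filter (fun T => S ⊆ T), if y ∈ T \ S then pid T else 0 := by
    intro y
    unfold extW wgt
    split_ifs with h
    · simp [h]
    · rw [← Finset.sum_filter, Finset.filter_filter]
      refine Finset.sum_congr ?_ fun _ _ => rfl
      ext T
      simp only [Finset.mem_filter, Finset.insert_subset_iff, Finset.mem_sdiff, h]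
      tauto
  simp_rw [h1]
  rw [Finset.sum_comm]
  unfold wgt
  rw [Finset.mul_sum]
  refine Finset.sum_congr rfl fun T hT => ?_
  obtain ⟨hT, hST⟩ := Finset.mem_filter.1 hT
  rw [← Finset.sum_filter, Finset.sum_const, nsmul_eq_mul, Finset.filter_mem_eq_inter,
    Finset.univ_inter, Finset.cast_card_sdiff hST, (Finset.mem_filter.1 hT).2]

/-! ### Link distributions and the local walk in terms of weights -/

lemma mem_linkFaces {C : Finset (Finset E)} {S T : Finset E} {k : ℕ} :
    T ∈ linkFaces C S k ↔ S ∩ T = ∅ ∧ S ∪ T ∈ C ∧ T.card = k := by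
  simp [linkFaces]

/-- The link distribution is a positive multiple of the unnormalised weight. -/
lemma linkPi_scale {C : Finset (Finset E)} {d : ℕ} {pid : Finset E → ℝ}
    (hC : IsPureComplex C d) (hpid : IsTopDist C d pid) {S : Finset E} (hS : S ∈ C)
    {k : ℕ} (hk : S.card + k ≤ d) :
    ∃ κ : ℝ, 0 < κ ∧ ∀ T ∈ linkFaces C S k, linkPi C d pid S k T = κ * wgt C d pid (S ∪ T) := by
  have hface : ∀ T ∈ linkFaces C S k, S ∪ T ∈ faces C (S.card + k) := by
    intro T hT
    obtain ⟨h1, h2, h3⟩ := mem_linkFaces.1 hT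
    exact Finset.mem_filter.2 ⟨h2, by
      rw [Finset.card_union_of_disjoint (Finset.disjoint_iff_inter_eq_empty.2 h1), h3]⟩
  obtain ⟨U, hU, hSU, hc⟩ := hC.2.2 S hS
  obtain ⟨T₀, hT₀, hc₀⟩ := Finset.exists_subset_card_eq (s := U \ S) (n := k) (by
    rw [Finset.card_sdiff_of_subset hSU]; omega)
  have hmem : T₀ ∈ linkFaces C S k := by
    refine mem_linkFaces.2 ⟨?_, hC.2.1 U hU _ ?_, hc₀⟩
    · rw [← Finset.disjoint_iff_inter_eq_empty]
      exact Finset.disjoint_sdiff.mono_right hT₀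
    · exact Finset.union_subset hSU (hT₀.trans Finset.sdiff_subset)
  have hZ : 0 < ∑ T ∈ faces C (S.card + k), wgt C d pid T :=
    Finset.sum_pos (fun T hT => wgt_pos hC hpid (Finset.mem_filter.1 hT).1)
      ⟨_, hface T₀ hmem⟩
  have hpos : ∀ T ∈ linkFaces C S k, 0 < piLev C d pid (S.card + k) (S ∪ T) := by
    intro T hT
    rw [piLev, if_pos (hface T hT)]
    exact div_pos (wgt_pos hC hpid (Finset.mem_filter.1 (hface T hT)).1) hZ
  have hZ' := Finset.sum_pos hpos ⟨T₀, hmem⟩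
  refine ⟨1 / ((∑ T ∈ faces C (S.card + k), wgt C d pid T) *
    ∑ T' ∈ linkFaces C S k, piLev C d pid (S.card + k) (S ∪ T')), by positivity, ?_⟩
  intro T hT
  rw [linkPi, if_pos hT, piLev, if_pos (hface T hT)]
  field_simp

lemma sum_linkFaces_one {C : Finset (Finset E)} {d : ℕ} {pid : Finset E → ℝ}
    (hC : IsPureComplex C d) (S : Finset E) (F : Finset E → ℝ) :
    ∑ T ∈ linkFaces C S 1, wgt C d pid (S ∪ T) * F T = ∑ x, extW C d pid S x * F {x} := by
  have him : linkFaces C S 1 =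
      (Finset.univ.filter fun x => x ∉ S ∧ insert x S ∈ C).image fun x => {x} := by
    ext T
    simp only [mem_linkFaces, Finset.mem_image, Finset.mem_filter, Finset.mem_univ, true_and]
    constructor
    · rintro ⟨h1, h2, h3⟩
      obtain ⟨x, rfl⟩ := Finset.card_eq_one.1 h3
      refine ⟨x, ⟨fun hx => by
        simpa [h1] using Finset.mem_inter.2 ⟨hx, Finset.mem_singleton_self x⟩, by rwa [Finset.insert_eq, Finset.union_comm]⟩, rfl⟩
    · rintro ⟨x, ⟨h1, h2⟩, rfl⟩
      refine ⟨by
        rw [← Finset.disjoint_iff_inter_eq_empty]; simpa using h1, by rwa [Finset.union_comm, ← Finset.insert_eq], by simp⟩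
  rw [him, Finset.sum_image (fun x _ y _ h => Finset.singleton_injective h), Finset.sum_filter]
  refine Finset.sum_congr rfl fun x _ => ?_
  unfold extW
  by_cases hx : x ∈ S
  · simp [hx]
  · by_cases hI : insert x S ∈ C
    · simp [hx, hI, Finset.union_comm S]
    · simp [hx, hI, wgt_eq_zero hC hI]

lemma sum_linkFaces_two {C : Finset (Finset E)} {d : ℕ} {pid : Finset E → ℝ}
    (hC : IsPureComplex C d) {S : Finset E} {x : E} (hx : x ∉ S) (F : Finset E → ℝ) :
    ∑ T ∈ (linkFaces C S 2).filter (fun T => {x} ⊆ T), wgt C d pid (S ∪ T) * F T =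
      ∑ y, extW C d pid (insert x S) y * F {x, y} := by
  have hun : ∀ y, S ∪ {x, y} = insert y (insert x S) := by
    intro y; ext z; simp only [Finset.mem_union, Finset.mem_insert, Finset.mem_singleton]; tauto
  have him : (linkFaces C S 2).filter (fun T => {x} ⊆ T) =
      (Finset.univ.filter fun y => y ∉ insert x S ∧ insert y (insert x S) ∈ C).image
        fun y => {x, y} := by
    ext T
    simp only [mem_linkFaces, Finset.mem_image, Finset.mem_filter, Finset.mem_univ, true_and,
      Finset.singleton_subset_iff]
    constructor
    · rintro ⟨⟨h1, h2, h3⟩, hxT⟩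
      obtain ⟨y, hy⟩ : ∃ y, T.erase x = {y} :=
        Finset.card_eq_one.1 (by rw [Finset.card_erase_of_mem hxT, h3])
      have hyT : y ∈ T.erase x := by rw [hy]; simp
      obtain rfl : T = {x, y} := by rw [← Finset.insert_erase hxT, hy]
      refine ⟨y, ⟨?_, by rwa [← hun]⟩, rfl⟩
      rw [Finset.mem_insert, not_or]
      refine ⟨Finset.ne_of_mem_erase hyT, fun hyS => ?_⟩
      have : y ∈ S ∩ {x, y} := by simp [hyS]
      rw [h1] at this
      simp at this
    · rintro ⟨y, ⟨h1, h2⟩, rfl⟩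
      rw [Finset.mem_insert, not_or] at h1
      refine ⟨⟨?_, by rwa [hun], Finset.card_pair (Ne.symm h1.1)⟩, by simp⟩
      rw [← Finset.disjoint_iff_inter_eq_empty]
      simp [hx, h1.2]
  rw [him, Finset.sum_image, Finset.sum_filter]
  · refine Finset.sum_congr rfl fun y _ => ?_
    unfold extW
    by_cases hy : y ∈ insert x S
    · simp only [hy, not_true_eq_false, false_and, if_false, if_true, zero_mul]
    · by_cases hI : insert y (insert x S) ∈ C
      · simp only [hy, hI, not_false_eq_true, and_self, if_true, if_false, hun]
      · simp only [hy, hI, and_false, if_false, wgt_eq_zero hC hI, zero_mul]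
  · intro y hy z hz h
    have hy' : y ∉ insert x S := (Finset.mem_filter.1 hy).2.1
    have hyx : y ≠ x := fun h => hy' (by simp [h])
    have : y ∈ ({x, z} : Finset E) := by
      have h' : ({x, y} : Finset E) = {x, z} := h
      rw [← h']; simp
    simpa [hyx] using this

/-- The local walk at `S` moves from `x` to `y` with probability proportional to the weight of
`S ∪ {x, y}`, the normalisation being `(d - |S| - 1) * wgt (S ∪ {x})`. -/
lemma localWalk_eq {C : Finset (Finset E)} {d : ℕ} {pid : Finset E → ℝ}
    (hC : IsPureComplex C d) (hpid : IsTopDist C d pid) {S : Finset E} {x : E} (hx : x ∉ S)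
    (hxS : insert x S ∈ C) (hd : S.card + 2 ≤ d) (f : Finset E → ℝ) :
    ((d : ℝ) - S.card - 1) * wgt C d pid (insert x S) * localWalk C d pid S f {x} =
      ∑ y, extW C d pid (insert x S) y * f {y} := by
  have hS : S ∈ C := hC.2.1 _ hxS _ (Finset.subset_insert _ _)
  obtain ⟨κ, hκ, hpi⟩ := linkPi_scale hC hpid hS hd
  have hw := wgt_pos hC hpid hxS
  have hd' : (S.card : ℝ) + 2 ≤ d := by exact_mod_cast hd
  have hM : 0 < ((d : ℝ) - S.card - 1) * wgt C d pid (insert x S) :=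
    mul_pos (by linarith) hw
  have hsum : ∑ y, extW C d pid (insert x S) y =
      ((d : ℝ) - S.card - 1) * wgt C d pid (insert x S) := by
    rw [sum_extW, Finset.card_insert_of_notMem hx]
    push_cast
    ring
  set M := ((d : ℝ) - S.card - 1) * wgt C d pid (insert x S) with hMdef
  have hN : ∑ T ∈ (linkFaces C S 2).filter (fun T => {x} ⊆ T), linkPi C d pid S 2 T = κ * M := by
    rw [← hsum]
    have := sum_linkFaces_two (pid := pid) hC hx (fun _ => κ)
    rw [Finset.mul_sum]
    simp_rw [mul_comm κ]
    rw [← this]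
    refine Finset.sum_congr rfl fun T hT => ?_
    rw [hpi T (Finset.mem_filter.1 hT).1, mul_comm]
  have hup : linkUpDown C d pid S 1 f {x} =
      ∑ y, extW C d pid (insert x S) y * (1 / M * downOp 2 f {x, y}) := by
    rw [← sum_linkFaces_two hC hx (fun T => 1 / M * downOp 2 f T)]
    unfold linkUpDown linkUp upWith
    refine Finset.sum_congr rfl fun T hT => ?_
    rw [hN, hpi T (Finset.mem_filter.1 hT).1]
    field_simp
  have hdown : ∀ y, extW C d pid (insert x S) y * (1 / M * downOp 2 f {x, y}) =
      extW C d pid (insert x S) y * f {y} * (1 / (2 * M)) +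
        extW C d pid (insert x S) y * (f {x} * (1 / (2 * M))) := by
    intro y
    by_cases hy : y ∈ insert x S
    · simp [extW, hy]
    have hyx : x ≠ y := fun h => hy (by simp [h])
    have h1 : ({x, y} : Finset E).erase x = {y} := by
      rw [Finset.erase_insert]; simpa using hyx
    have h2 : ({x, y} : Finset E).erase y = {x} := by
      rw [Finset.pair_comm, Finset.erase_insert]; simpa using hyx.symm
    unfold downOp
    rw [Finset.sum_pair hyx, h1, h2]
    push_cast
    field_simp
  unfold localWalk
  rw [hup]
  simp_rw [hdown]
  rw [Finset.sum_add_distrib, ← Finset.sum_mul, ← Finset.sum_mul, hsum]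
  field_simp
  ring

/-! ### Symmetric weights of triples -/

/-- Three-fold weights: `extW {v, x} y`, set to zero when `x = v`. -/
def extW₃ (C : Finset (Finset E)) (d : ℕ) (pid : Finset E → ℝ) (v x y : E) : ℝ :=
  if x = v then 0 else extW C d pid {x, v} y

lemma extW₃_nonneg {C : Finset (Finset E)} {d : ℕ} {pid : Finset E → ℝ}
    (hpid : IsTopDist C d pid) (v x y : E) : 0 ≤ extW₃ C d pid v x y := by
  unfold extW₃
  split_ifs
  exacts [le_rfl, ext_nonneg hpid _ _]

lemma ext_comm (C : Finset (Finset E)) (d : ℕ) (pid : Finset E → ℝ) (x y : E) :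
    extW C d pid {x} y = extW C d pid {y} x := by
  unfold extW
  simp only [Finset.mem_singleton, eq_comm (a := y), Finset.pair_comm y]

lemma extW₃_swap (C : Finset (Finset E)) (d : ℕ) (pid : Finset E → ℝ) (v x y : E) :
    extW₃ C d pid v x y = extW₃ C d pid v y x := by
  unfold extW₃ extW
  rw [Finset.insert_comm y x {v}]
  by_cases h1 : x = v <;> by_cases h2 : y = v <;> by_cases h3 : x = y <;>
    simp_all [eq_comm]

lemma extW₃_rot (C : Finset (Finset E)) (d : ℕ) (pid : Finset E → ℝ) (v x y : E) :
    extW₃ C d pid v x y = extW₃ C d pid x v y := by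
  unfold extW₃
  rw [Finset.pair_comm x v]
  simp only [eq_comm (a := x)]

lemma sum_extW₃ (C : Finset (Finset E)) (d : ℕ) (pid : Finset E → ℝ) (v x : E) :
    ∑ y, extW₃ C d pid v x y = ((d : ℝ) - 2) * extW C d pid {v} x := by
  unfold extW₃
  by_cases h : x = v
  · simp [h, extW]
  · simp only [h, if_false]
    rw [sum_extW, Finset.card_pair h]
    simp [extW, h]

/-! ### Poincaré inequality in the link of a vertex -/

lemma sum_linkPi {C : Finset (Finset E)} {d : ℕ} {pid : Finset E → ℝ}
    (hC : IsPureComplex C d) {S : Finset E} {κ : ℝ}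
    (hpi : ∀ T ∈ linkFaces C S 1, linkPi C d pid S 1 T = κ * wgt C d pid (S ∪ T))
    (F : Finset E → ℝ) :
    ∑ T ∈ linkFaces C S 1, linkPi C d pid S 1 T * F T = κ * ∑ x, extW C d pid S x * F {x} := by
  rw [← sum_linkFaces_one hC, Finset.mul_sum]
  refine Finset.sum_congr rfl fun T hT => ?_
  rw [hpi T hT, mul_assoc]

/-- The Poincaré inequality `𝔈_{G_v}(f, f) ≥ (1 - γ) Var_{π_{v,1}}(f)` in unnormalised form. -/
lemma local_poincare {C : Finset (Finset E)} {d : ℕ} {pid : Finset E → ℝ}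
    (hC : IsPureComplex C d) (hpid : IsTopDist C d pid) (hd : 3 ≤ d) {γ : ℝ} {v : E}
    (hv : {v} ∈ C)
    (hloc : lamTwo (linkPi C d pid {v} 1) (linkFaces C {v} 1) (localWalk C d pid {v}) ≤ γ)
    (f : Finset E → ℝ) :
    (1 - γ) * ((∑ x, extW C d pid {v} x * f {x} ^ 2) -
      (∑ x, extW C d pid {v} x * f {x}) ^ 2 / (((d : ℝ) - 1) * wgt C d pid {v})) ≤
    (∑ x, extW C d pid {v} x * f {x} ^ 2) -
      (∑ x, ∑ y, extW₃ C d pid v x y * (f {x} * f {y})) / ((d : ℝ) - 2) := by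
  have hd' : (3 : ℝ) ≤ d := by exact_mod_cast hd
  have hd2 : (0 : ℝ) < (d : ℝ) - 2 := by linarith
  obtain ⟨κ, hκ, hpi⟩ := linkPi_scale hC hpid hv (k := 1) (by simp; omega)
  have hb := ext_nonneg hpid {v}
  have hwalk : ∀ (g : Finset E → ℝ) (x : E), extW C d pid {v} x * localWalk C d pid {v} g {x} =
      (∑ y, extW₃ C d pid v x y * g {y}) / ((d : ℝ) - 2) := by
    intro g x
    unfold extW₃
    by_cases hx : x = v
    · simp [extW, hx]
    by_cases hI : insert x {v} ∈ C
    · have := localWalk_eq hC hpid (S := {v}) (x := x) (by simpa using hx) hI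
        (by simp; omega) g
      rw [Finset.card_singleton] at this
      simp only [hx, if_false]
      rw [← this]
      simp only [extW, Finset.mem_singleton, hx, if_false]
      push_cast
      field_simp
      ring
    · have h0 : extW C d pid {v} x = 0 := by simp [extW, hx, wgt_eq_zero hC hI]
      have hz := sum_extW₃ C d pid v x
      rw [h0, mul_zero, Finset.sum_eq_zero_iff_of_nonneg
        (fun y _ => extW₃_nonneg hpid v x y)] at hz
      rw [h0, zero_mul, Finset.sum_eq_zero, zero_div]
      intro y hy
      have := hz y hy
      unfold extW₃ at this
      rw [this, zero_mul]
  have hquad : ∀ g : Finset E → ℝ,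
      ∑ x, extW C d pid {v} x * (g {x} * localWalk C d pid {v} g {x}) =
        (∑ x, ∑ y, extW₃ C d pid v x y * (g {x} * g {y})) / ((d : ℝ) - 2) := by
    intro g
    rw [Finset.sum_div]
    refine Finset.sum_congr rfl fun x _ => ?_
    rw [mul_left_comm, hwalk, mul_div_assoc', Finset.mul_sum]
    congr 1
    exact Finset.sum_congr rfl fun y _ => by ring
  have hrow : ∀ h : E → ℝ, ∑ x, ∑ y, extW₃ C d pid v x y * h x =
      ((d : ℝ) - 2) * ∑ x, extW C d pid {v} x * h x := by
    intro h
    rw [Finset.mul_sum]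
    refine Finset.sum_congr rfl fun x _ => ?_
    rw [← Finset.sum_mul, sum_extW₃, mul_assoc]
  have hcol : ∀ h : E → ℝ, ∑ x, ∑ y, extW₃ C d pid v x y * h y =
      ((d : ℝ) - 2) * ∑ x, extW C d pid {v} x * h x := by
    intro h
    rw [Finset.sum_comm, ← hrow]
    refine Finset.sum_congr rfl fun x _ => Finset.sum_congr rfl fun y _ => ?_
    rw [extW₃_swap]
  -- Rayleigh quotients are at most `1`, so the supremum defining `lamTwo` is a genuine bound.
  have hle1 : ∀ g : Finset E → ℝ,
      (∑ x, ∑ y, extW₃ C d pid v x y * (g {x} * g {y})) / ((d : ℝ) - 2) ≤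
        ∑ x, extW C d pid {v} x * g {x} ^ 2 := by
    intro g
    rw [div_le_iff₀ hd2]
    have h1 := hrow (fun x => g {x} ^ 2)
    have h2 := hcol (fun x => g {x} ^ 2)
    have h3 : ∑ x, ∑ y, extW₃ C d pid v x y * (g {x} * g {y}) ≤
        ∑ x, ∑ y, (extW₃ C d pid v x y * g {x} ^ 2 / 2 + extW₃ C d pid v x y * g {y} ^ 2 / 2) := by
      refine Finset.sum_le_sum fun x _ => Finset.sum_le_sum fun y _ => ?_
      nlinarith [mul_nonneg (extW₃_nonneg hpid v x y) (sq_nonneg (g {x} - g {y}))]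
    simp only [Finset.sum_add_distrib, ← Finset.sum_div] at h3
    rw [h1, h2] at h3
    linarith
  have hq : ∀ g : Finset E → ℝ, ∑ T ∈ linkFaces C {v} 1,
      linkPi C d pid {v} 1 T * g T * localWalk C d pid {v} g T =
      κ * ((∑ x, ∑ y, extW₃ C d pid v x y * (g {x} * g {y})) / ((d : ℝ) - 2)) := by
    intro g
    rw [← hquad, ← sum_linkPi hC hpi (fun T => g T * localWalk C d pid {v} g T)]
    exact Finset.sum_congr rfl fun T _ => by ring
  have hsq : ∀ g : Finset E → ℝ, ∑ T ∈ linkFaces C {v} 1,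
      linkPi C d pid {v} 1 T * g T ^ 2 = κ * ∑ x, extW C d pid {v} x * g {x} ^ 2 :=
    fun g => sum_linkPi hC hpi (fun T => g T ^ 2)
  have hsqn : ∀ g : Finset E → ℝ, 0 ≤ ∑ x, extW C d pid {v} x * g {x} ^ 2 :=
    fun g => Finset.sum_nonneg fun x _ => mul_nonneg (hb x) (sq_nonneg _)
  have hzero : ∀ g : Finset E → ℝ, ∑ x, extW C d pid {v} x * g {x} = 0 →
      (∑ x, ∑ y, extW₃ C d pid v x y * (g {x} * g {y})) / ((d : ℝ) - 2) ≤
        γ * ∑ x, extW C d pid {v} x * g {x} ^ 2 := by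
    intro g hg
    by_cases h0 : ∑ x, extW C d pid {v} x * g {x} ^ 2 = 0
    · have := hle1 g
      rw [h0] at this ⊢
      linarith
    have hpos := lt_of_le_of_ne (hsqn g) (Ne.symm h0)
    have hR : (κ * ((∑ x, ∑ y, extW₃ C d pid v x y * (g {x} * g {y})) / ((d : ℝ) - 2))) /
        (κ * ∑ x, extW C d pid {v} x * g {x} ^ 2) ≤ γ := by
      refine le_trans ?_ hloc
      unfold lamTwo
      apply le_csSup
      on_goal 1 => use 1
      on_goal 2 => refine ⟨g, ?_, ?_, ?_⟩
      · rintro r ⟨h, -, -, rfl⟩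
        rw [hq, hsq]
        exact div_le_one_of_le₀ (mul_le_mul_of_nonneg_left (hle1 h) hκ.le)
          (mul_nonneg hκ.le (hsqn h))
      · rw [sum_linkPi hC hpi, hg, mul_zero]
      · rw [hsq]
        exact mul_ne_zero hκ.ne' h0
      · rw [hq, hsq]
    rwa [mul_div_mul_left _ _ hκ.ne', div_le_iff₀ hpos] at hR
  -- Apply the mean-zero case to `f` minus its mean under `π_{v,1}`.
  have hM : 0 < ((d : ℝ) - 1) * wgt C d pid {v} := mul_pos (by linarith) (wgt_pos hC hpid hv)
  have hMs : ∑ x, extW C d pid {v} x = ((d : ℝ) - 1) * wgt C d pid {v} := by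
    rw [sum_extW]; simp
  set M := ((d : ℝ) - 1) * wgt C d pid {v}
  set B := ∑ x, extW C d pid {v} x * f {x} with hB
  set m := B / M with hm
  have hmM : m * M = B := by rw [hm]; field_simp
  have e1 : ∑ x, extW C d pid {v} x * (f {x} - m) = 0 := by
    simp only [mul_sub, Finset.sum_sub_distrib, ← Finset.sum_mul]
    rw [hMs, ← hB]; linarith
  have e2 : ∑ x, extW C d pid {v} x * (f {x} - m) ^ 2 =
      (∑ x, extW C d pid {v} x * f {x} ^ 2) - m * B := by
    have : ∀ x, extW C d pid {v} x * (f {x} - m) ^ 2 = extW C d pid {v} x * f {x} ^ 2 -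
        2 * m * (extW C d pid {v} x * f {x}) + extW C d pid {v} x * m ^ 2 := fun x => by ring
    simp only [this, Finset.sum_sub_distrib, Finset.sum_add_distrib, ← Finset.sum_mul,
      ← Finset.mul_sum]
    rw [hMs, ← hB, ← hmM]; ring
  have e3 : ∑ x, ∑ y, extW₃ C d pid v x y * ((f {x} - m) * (f {y} - m)) =
      (∑ x, ∑ y, extW₃ C d pid v x y * (f {x} * f {y})) - ((d : ℝ) - 2) * (m * B) := by
    have : ∀ x y, extW₃ C d pid v x y * ((f {x} - m) * (f {y} - m)) =
        extW₃ C d pid v x y * (f {x} * f {y}) - extW₃ C d pid v x y * (m * f {x}) -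
        extW₃ C d pid v x y * (m * f {y}) + extW₃ C d pid v x y * m ^ 2 := fun x y => by ring
    simp only [this, Finset.sum_sub_distrib, Finset.sum_add_distrib]
    have h1 := hrow (fun x => m * f {x})
    have h2 := hcol (fun x => m * f {x})
    have h3 := hrow (fun x => m ^ 2)
    have h4 : ∑ x, extW C d pid {v} x * (m * f {x}) = m * B := by
      rw [hB, Finset.mul_sum]; exact Finset.sum_congr rfl fun _ _ => by ring
    rw [← Finset.sum_mul, hMs] at h3
    rw [h4] at h1 h2
    rw [h1, h2, h3, ← hmM]; ring
  have hfin := hzero (fun T => f T - m) e1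
  rw [e2, e3, sub_div, mul_div_cancel_left₀ _ hd2.ne'] at hfin
  have : B ^ 2 / M = m * B := by rw [hm]; ring
  rw [this]
  linarith

/-! ### Averaging over vertices -/

/-- **Key inequality in the proof of the trickling down theorem.** If `d ≥ 3` and
`λ₂(G_v) ≤ γ < 1` for every vertex `v`, then for every `f : C(1) → ℝ`,
`𝔈_{G_∅}(f,f) ≥ (1-γ)(Var_{π_1}(f) - Var_{π_1}(G_∅ f))`. -/
theorem trickling_down_key_inequality {E : Type*} [Fintype E] [DecidableEq E]
    (C : Finset (Finset E)) (d : ℕ) (pid : Finset E → ℝ)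
    (hC : IsPureComplex C d) (hpid : IsTopDist C d pid)
    (hd : 3 ≤ d) (γ : ℝ) (hγ : γ < 1)
    (hloc : ∀ T ∈ faces C 1,
      lamTwo (linkPi C d pid T 1) (linkFaces C T 1) (localWalk C d pid T) ≤ γ) :
    ∀ f : Finset E → ℝ,
      pDiri (piLev C d pid 1) (faces C 1) (localWalk C d pid ∅) f f ≥
        (1 - γ) * (pVar (piLev C d pid 1) (faces C 1) f -
          pVar (piLev C d pid 1) (faces C 1) (localWalk C d pid ∅ f)) := by
  intro f
  have hd' : (3 : ℝ) ≤ d := by exact_mod_cast hd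
  have hd1 : (0 : ℝ) < (d : ℝ) - 1 := by linarith
  have hd2 : (0 : ℝ) < (d : ℝ) - 2 := by linarith
  have hfl : faces C 1 = linkFaces C ∅ 1 := by
    ext T; simp [faces, mem_linkFaces]
  have hext0 : ∀ x, extW C d pid ∅ x = wgt C d pid {x} := fun x => by simp [extW]
  -- `Z` normalises `π_1`; only its nonnegativity matters, the claim being homogeneous in it.
  set Z := ∑ T ∈ faces C 1, wgt C d pid T with hZ
  have hZn : 0 ≤ Z := Finset.sum_nonneg fun T _ => wgt_nonneg hpid T
  have hpi : ∀ F : Finset E → ℝ, ∑ T ∈ faces C 1, piLev C d pid 1 T * F T =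
      (∑ x, wgt C d pid {x} * F {x}) / Z := by
    intro F
    have h := sum_linkFaces_one (pid := pid) hC ∅ F
    simp only [hext0, Finset.empty_union, ← hfl] at h
    rw [← h, Finset.sum_div]
    refine Finset.sum_congr rfl fun T hT => ?_
    rw [piLev, if_pos hT]
    ring
  set g : E → ℝ := fun x => localWalk C d pid ∅ f {x} with hg
  have hwalk : ∀ x, wgt C d pid {x} * g x =
      (∑ y, extW C d pid {x} y * f {y}) / ((d : ℝ) - 1) := by
    intro x
    by_cases hx : {x} ∈ C
    · have := localWalk_eq hC hpid (S := ∅) (x := x) (by simp) hx (by simp; omega) f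
      simp only [Finset.card_empty, Nat.cast_zero, sub_zero, insert_empty_eq] at this
      rw [← this]
      field_simp
      rfl
    · have h0 := wgt_eq_zero (pid := pid) hC hx
      have hz := sum_extW C d pid {x}
      rw [h0, mul_zero, Finset.sum_eq_zero_iff_of_nonneg
        (fun y _ => ext_nonneg hpid {x} y)] at hz
      rw [h0, zero_mul, Finset.sum_eq_zero, zero_div]
      intro y hy
      rw [hz y hy, zero_mul]
  have hcol : ∀ h : E → ℝ, ∑ v, ∑ x, extW C d pid {v} x * h x =
      ((d : ℝ) - 1) * ∑ x, wgt C d pid {x} * h x := by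
    intro h
    rw [Finset.sum_comm, Finset.mul_sum]
    refine Finset.sum_congr rfl fun x _ => ?_
    simp_rw [ext_comm C d pid _ x]
    rw [← Finset.sum_mul, sum_extW]
    simp [mul_assoc]
  have hmean : ∑ x, wgt C d pid {x} * g x = ∑ x, wgt C d pid {x} * f {x} := by
    simp_rw [hwalk]
    rw [← Finset.sum_div, hcol]
    field_simp
  have hcross : ∑ v, ∑ x, ∑ y, extW₃ C d pid v x y * (f {x} * f {y}) =
      ((d : ℝ) - 2) * (((d : ℝ) - 1) * ∑ x, wgt C d pid {x} * (f {x} * g x)) := by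
    rw [Finset.sum_comm, Finset.mul_sum, Finset.mul_sum]
    refine Finset.sum_congr rfl fun x _ => ?_
    rw [mul_left_comm (wgt C d pid {x}), hwalk, Finset.sum_comm]
    have : ((d : ℝ) - 2) * (((d : ℝ) - 1) *
        (f {x} * ((∑ y, extW C d pid {x} y * f {y}) / ((d : ℝ) - 1)))) =
        ∑ y, ((d : ℝ) - 2) * extW C d pid {x} y * (f {x} * f {y}) := by
      rw [show ∑ y, ((d : ℝ) - 2) * extW C d pid {x} y * (f {x} * f {y}) =
        ∑ y, (((d : ℝ) - 2) * f {x}) * (extW C d pid {x} y * f {y}) from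
        Finset.sum_congr rfl fun y _ => by ring, ← Finset.mul_sum]
      field_simp
    rw [this]
    refine Finset.sum_congr rfl fun y _ => ?_
    rw [← Finset.sum_mul, ← sum_extW₃]
    congr 1
    refine Finset.sum_congr rfl fun v _ => ?_
    rw [extW₃_rot, extW₃_swap]
  have hvar : ∑ v, (∑ x, extW C d pid {v} x * f {x}) ^ 2 / (((d : ℝ) - 1) * wgt C d pid {v}) =
      ((d : ℝ) - 1) * ∑ x, wgt C d pid {x} * g x ^ 2 := by
    rw [Finset.mul_sum]
    refine Finset.sum_congr rfl fun v _ => ?_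
    have h1 : ∑ x, extW C d pid {v} x * f {x} = ((d : ℝ) - 1) * (wgt C d pid {v} * g v) := by
      rw [hwalk]; field_simp
    rw [h1]
    by_cases h0 : wgt C d pid {v} = 0
    · simp [h0]
    · field_simp
  -- Non-vertices `v` contribute zero to both sides.
  have hloc' : ∀ v : E, (1 - γ) * ((∑ x, extW C d pid {v} x * f {x} ^ 2) -
      (∑ x, extW C d pid {v} x * f {x}) ^ 2 / (((d : ℝ) - 1) * wgt C d pid {v})) ≤
      (∑ x, extW C d pid {v} x * f {x} ^ 2) -
      (∑ x, ∑ y, extW₃ C d pid v x y * (f {x} * f {y})) / ((d : ℝ) - 2) := by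
    intro v
    by_cases hv : {v} ∈ C
    · exact local_poincare hC hpid hd hv (hloc {v} (by simp [faces, hv])) f
    · have hz := sum_extW C d pid {v}
      rw [wgt_eq_zero hC hv, mul_zero, Finset.sum_eq_zero_iff_of_nonneg
        (fun y _ => ext_nonneg hpid {v} y)] at hz
      have hz3 : ∀ x y, extW₃ C d pid v x y = 0 := by
        intro x y
        have h := sum_extW₃ C d pid v x
        rw [hz x (Finset.mem_univ _), mul_zero, Finset.sum_eq_zero_iff_of_nonneg
          (fun y _ => extW₃_nonneg hpid v x y)] at h
        exact h y (Finset.mem_univ _)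
      have hz' : ∀ x, extW C d pid {v} x = 0 := fun x => hz x (Finset.mem_univ _)
      simp [hz', hz3]
  have hsum := Finset.sum_le_sum fun v (_ : v ∈ Finset.univ) => hloc' v
  rw [← Finset.mul_sum, Finset.sum_sub_distrib, Finset.sum_sub_distrib, ← Finset.sum_div, hvar,
    hcross, hcol (fun x => f {x} ^ 2), mul_div_cancel_left₀ _ hd2.ne', ← mul_sub, ← mul_sub,
    mul_left_comm] at hsum
  have hmain := le_of_mul_le_mul_left hsum hd1
  have hD : pDiri (piLev C d pid 1) (faces C 1) (localWalk C d pid ∅) f f =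
      (∑ x, wgt C d pid {x} * f {x} ^ 2 - ∑ x, wgt C d pid {x} * (f {x} * g x)) / Z := by
    unfold pDiri
    simp_rw [mul_assoc]
    rw [hpi (fun T => f T * (f T - localWalk C d pid ∅ f T)), ← Finset.sum_sub_distrib]
    congr 1
    exact Finset.sum_congr rfl fun x _ => by simp only [hg]; ring
  rw [hD]
  unfold pVar
  rw [hpi (fun T => f T ^ 2), hpi f, hpi (fun T => localWalk C d pid ∅ f T ^ 2),
    hpi (localWalk C d pid ∅ f)]
  change _ ≥ (1 - γ) * (_ - ((∑ x, wgt C d pid {x} * g x ^ 2) / Z -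
    ((∑ x, wgt C d pid {x} * g x) / Z) ^ 2))
  rw [hmean, sub_sub_sub_cancel_right, ← sub_div, mul_div_assoc']
  exact div_le_div_of_nonneg_right hmain hZn
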